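/- For every t > 0 and ε > 0, the function x ↦ exp(‖x‖²/(2tε)) w_ε(x,t) is strictly log-convex on ℝⁿ; equivalently, the function x ↦ ½‖x‖² − t S_ε(x,t) is strictly convex on ℝⁿ. -/

import Mathlib

open scoped Topology
open Filter MeasureTheory

/-- The integrand `exp(−(‖x−y‖²/(2t) + J(y))/ε)`, with the convention `exp(−∞) = 0`. -/
noncomputable def heatIntegrand (n : ℕ) (J : EuclideanSpace ℝ (Fin n) → EReal)
    (x : EuclideanSpace ℝ (Fin n)) (t ε : ℝ) (y : EuclideanSpace ℝ (Fin n)) : ℝ :=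
  if J y = ⊤ then 0 else Real.exp (-((‖x - y‖ ^ 2 / (2 * t) + (J y).toReal) / ε))

/-- `w_ε(x,t) = (2πtε)^{−n/2} ∫ exp(−(‖x−y‖²/(2t) + J(y))/ε) dy`. -/
noncomputable def heatSol (n : ℕ) (J : EuclideanSpace ℝ (Fin n) → EReal)
    (x : EuclideanSpace ℝ (Fin n)) (t ε : ℝ) : ℝ :=
  (2 * Real.pi * t * ε) ^ (-(n : ℝ) / 2) * ∫ y, heatIntegrand n J x t ε y

/-- `S_ε(x,t) = −ε ln w_ε(x,t)`. -/
noncomputable def viscSol (n : ℕ) (J : EuclideanSpace ℝ (Fin n) → EReal)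
    (x : EuclideanSpace ℝ (Fin n)) (t ε : ℝ) : ℝ :=
  -ε * Real.log (heatSol n J x t ε)

/-!
Expanding the square, `exp(‖x‖²/(2tε)) w_ε(x,t)` is a constant times `∫ exp(⟪x, y⟫/(tε)) dν(y)`,
where `dν = exp(−(‖y‖²/(2t) + J(y))/ε) dy` does not depend on `x`. Its logarithm is the
log-partition function of an exponential family, which is convex by Hölder's inequality. Equality
in Hölder between `x₁ ≠ x₂` would make `⟪x₁ - x₂, y⟫` constant for `ν`-almost every `y`, which is
impossible because `ν` is nonzero and absolutely continuous, while hyperplanes are Lebesgue-null.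
-/

theorem strictConvexOn_const_mul {V : Type*} [AddCommGroup V] [Module ℝ V] {s : Set V} {f : V → ℝ}
    (hf : StrictConvexOn ℝ s f) {c : ℝ} (hc : 0 < c) : StrictConvexOn ℝ s fun x ↦ c * f x := by
  refine ⟨hf.1, fun x hx y hy hxy a b ha hb hab ↦ ?_⟩
  simpa only [smul_eq_mul, mul_add, mul_left_comm c] using
    mul_lt_mul_of_pos_left (hf.2 hx hy hxy ha hb hab) hc

section ExponentialFamily

open scoped RealInnerProductSpace

variable {α : Type*} {mα : MeasurableSpace α} {μ : Measure α} {a b : ℝ}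

theorem integral_strictConvexOn_comp_lt {V : Type*} [AddCommGroup V] [Module ℝ V] {s : Set V}
    {φ : V → ℝ} {u v : α → V} (hφ : StrictConvexOn ℝ s φ) (hus : ∀ᵐ ω ∂μ, u ω ∈ s)
    (hvs : ∀ᵐ ω ∂μ, v ω ∈ s) (huv : ¬ u =ᵐ[μ] v) (ha : 0 < a) (hb : 0 < b) (hab : a + b = 1)
    (hu : Integrable (fun ω ↦ φ (u ω)) μ) (hv : Integrable (fun ω ↦ φ (v ω)) μ)
    (hc : Integrable (fun ω ↦ φ (a • u ω + b • v ω)) μ) :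
    ∫ ω, φ (a • u ω + b • v ω) ∂μ < a * ∫ ω, φ (u ω) ∂μ + b * ∫ ω, φ (v ω) ∂μ := by
  have hsum : Integrable (fun ω ↦ a * φ (u ω) + b * φ (v ω)) μ :=
    (hu.const_mul a).add (hv.const_mul b)
  have hle : ∀ᵐ ω ∂μ, φ (a • u ω + b • v ω) ≤ a * φ (u ω) + b * φ (v ω) := by
    filter_upwards [hus, hvs] with ω huω hvω
    exact hφ.convexOn.2 huω hvω ha.le hb.le hab
  rw [← integral_const_mul, ← integral_const_mul,
    ← integral_add (hu.const_mul a) (hv.const_mul b)]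
  refine lt_of_le_of_ne (integral_mono_ae hc hsum hle) fun heq ↦ huv ?_
  filter_upwards [(integral_eq_iff_of_ae_le hc hsum hle).1 heq, hus, hvs] with ω hω huω hvω
  by_contra hne
  exact (hφ.2 huω hvω hne ha hb hab).ne hω

theorem integrable_exp_convex_combination {f g : α → ℝ}
    (hf : Integrable (fun ω ↦ Real.exp (f ω)) μ) (hg : Integrable (fun ω ↦ Real.exp (g ω)) μ)
    (ha : 0 ≤ a) (hb : 0 ≤ b) (hab : a + b = 1) :
    Integrable (fun ω ↦ Real.exp (a * f ω + b * g ω)) μ := by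
  have hf_meas : AEMeasurable f μ := Real.aemeasurable_of_aemeasurable_exp hf.aemeasurable
  have hg_meas : AEMeasurable g μ := Real.aemeasurable_of_aemeasurable_exp hg.aemeasurable
  refine ((hf.const_mul a).add (hg.const_mul b)).mono'
    (by fun_prop : AEMeasurable _ μ).aestronglyMeasurable (ae_of_all _ fun ω ↦ ?_)
  rw [Real.norm_of_nonneg (Real.exp_pos _).le]
  exact convexOn_exp.2 (Set.mem_univ _) (Set.mem_univ _) ha hb hab

theorem integral_exp_sub_log_integral_exp [NeZero μ] {f : α → ℝ}
    (hf : Integrable (fun ω ↦ Real.exp (f ω)) μ) :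
    ∫ ω, Real.exp (f ω - Real.log (∫ ω', Real.exp (f ω') ∂μ)) ∂μ = 1 := by
  simp_rw [Real.exp_sub, Real.exp_log (integral_exp_pos hf), integral_div]
  exact div_self (integral_exp_pos hf).ne'

-- Strict Hölder inequality: normalise both integrals to `1`, then use strict convexity of `exp`.
theorem log_integral_exp_convex_combination_lt {f g : α → ℝ}
    (hf : Integrable (fun ω ↦ Real.exp (f ω)) μ) (hg : Integrable (fun ω ↦ Real.exp (g ω)) μ)
    (hfg : ∀ c : ℝ, ¬ ∀ᵐ ω ∂μ, f ω - g ω = c) (ha : 0 < a) (hb : 0 < b) (hab : a + b = 1) :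
    Real.log (∫ ω, Real.exp (a * f ω + b * g ω) ∂μ) <
      a * Real.log (∫ ω, Real.exp (f ω) ∂μ) + b * Real.log (∫ ω, Real.exp (g ω) ∂μ) := by
  have : NeZero μ := ⟨by rintro rfl; exact hfg 0 (by simp)⟩
  set A := Real.log (∫ ω, Real.exp (f ω) ∂μ)
  set B := Real.log (∫ ω, Real.exp (g ω) ∂μ)
  have hf' : Integrable (fun ω ↦ Real.exp (f ω - A)) μ := by
    simpa only [Real.exp_sub] using hf.div_const _
  have hg' : Integrable (fun ω ↦ Real.exp (g ω - B)) μ := by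
    simpa only [Real.exp_sub] using hg.div_const _
  have hne : ¬ (fun ω ↦ f ω - A) =ᵐ[μ] fun ω ↦ g ω - B := fun h ↦
    hfg (A - B) (h.mono fun ω hω ↦ by linarith)
  have hlt : ∫ ω, Real.exp (a * (f ω - A) + b * (g ω - B)) ∂μ < 1 := by
    have h := integral_strictConvexOn_comp_lt strictConvexOn_exp (by simp) (by simp) hne ha hb hab
      hf' hg' (integrable_exp_convex_combination hf' hg' ha.le hb.le hab)
    rwa [integral_exp_sub_log_integral_exp hf, integral_exp_sub_log_integral_exp hg,
      mul_one, mul_one, hab] at h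
  have hfactor : ∫ ω, Real.exp (a * (f ω - A) + b * (g ω - B)) ∂μ =
      (∫ ω, Real.exp (a * f ω + b * g ω) ∂μ) / Real.exp (a * A + b * B) := by
    rw [← integral_div]
    refine integral_congr_ae (ae_of_all _ fun ω ↦ ?_)
    simp only [← Real.exp_sub]
    ring_nf
  rw [hfactor, div_lt_one (Real.exp_pos _)] at hlt
  rwa [Real.log_lt_iff_lt_exp
    (integral_exp_pos (integrable_exp_convex_combination hf hg ha.le hb.le hab))]

variable {E : Type*} [NormedAddCommGroup E] [InnerProductSpace ℝ E]

/-- The log-partition function `θ ↦ log ∫ exp ⟪θ, T⟫ dμ` of the exponential family with base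
measure `μ` and sufficient statistic `T`. -/
noncomputable def logPartition (T : α → E) (μ : Measure α) (θ : E) : ℝ :=
  Real.log (∫ ω, Real.exp ⟪θ, T ω⟫ ∂μ)

theorem strictConvexOn_logPartition {T : α → E} {s : Set E} (hs : Convex ℝ s)
    (hexp : ∀ θ ∈ s, Integrable (fun ω ↦ Real.exp ⟪θ, T ω⟫) μ)
    (hT : ∀ θ : E, θ ≠ 0 → ∀ c : ℝ, ¬ ∀ᵐ ω ∂μ, ⟪θ, T ω⟫ = c) :
    StrictConvexOn ℝ s (logPartition T μ) := by
  refine ⟨hs, fun θ₁ hθ₁ θ₂ hθ₂ hne a b ha hb hab ↦ ?_⟩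
  have hdiff (c : ℝ) : ¬ ∀ᵐ ω ∂μ, ⟪θ₁, T ω⟫ - ⟪θ₂, T ω⟫ = c := by
    simpa only [inner_sub_left] using hT (θ₁ - θ₂) (sub_ne_zero.2 hne) c
  simpa only [logPartition, inner_add_left, real_inner_smul_left, smul_eq_mul] using
    log_integral_exp_convex_combination_lt (hexp θ₁ hθ₁) (hexp θ₂ hθ₂) hdiff ha hb hab

end ExponentialFamily

section FiniteDimensional

open scoped RealInnerProductSpace

variable {E : Type*} [NormedAddCommGroup E] [MeasurableSpace E] [BorelSpace E]

theorem ae_linearMap_apply_ne [NormedSpace ℝ E] [FiniteDimensional ℝ E] {μ : Measure E}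
    [μ.IsAddHaarMeasure] {L : E →ₗ[ℝ] ℝ} (hL : L ≠ 0) (c : ℝ) :
    ∀ᵐ y ∂μ, L y ≠ c :=
  (ae_comp_linearMap_mem_iff L μ volume (LinearMap.surjective hL)
    (measurableSet_singleton c).compl).2 (by simp [ae_iff])

theorem not_ae_inner_eq_const_of_absolutelyContinuous [InnerProductSpace ℝ E]
    [FiniteDimensional ℝ E] {μ ν : Measure E} [μ.IsAddHaarMeasure]
    (hνμ : ν ≪ μ) (hν : ν ≠ 0) {d : E} (hd : d ≠ 0) (c : ℝ) : ¬ ∀ᵐ y ∂ν, ⟪d, y⟫ = c := by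
  intro h
  have hL : innerₗ E d ≠ 0 := fun h0 ↦ hd (inner_self_eq_zero.1 (DFunLike.congr_fun h0 d))
  have hne : ∀ᵐ y ∂ν, ⟪d, y⟫ ≠ c := hνμ.ae_le (ae_linearMap_apply_ne hL c)
  have hfalse : ∀ᵐ _ ∂ν, False := by filter_upwards [h, hne] with y hy hy' using hy' hy
  exact hν (ae_eq_bot.1 (eventually_false_iff_eq_bot.1 hfalse))

theorem integrable_exp_neg_mul_sq_norm [InnerProductSpace ℝ E] [FiniteDimensional ℝ E]
    {b : ℝ} (hb : 0 < b) : Integrable fun y : E ↦ Real.exp (-b * ‖y‖ ^ 2) := by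
  have h : Integrable fun y : E ↦ Complex.exp (-(b : ℂ) * ‖y‖ ^ 2) := by
    simpa using GaussianFourier.integrable_cexp_neg_mul_sq_norm_add (V := E) (b := b)
      (by simpa) 0 0
  refine h.norm.congr (ae_of_all _ fun y ↦ ?_)
  simp only [Complex.norm_exp]
  norm_cast

end FiniteDimensional

section HeatIntegral

open scoped RealInnerProductSpace

variable {n : ℕ} {J : EuclideanSpace ℝ (Fin n) → EReal} {t ε m : ℝ}

theorem heatIntegrand_nonneg (x y : EuclideanSpace ℝ (Fin n)) :
    0 ≤ heatIntegrand n J x t ε y := by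
  unfold heatIntegrand
  split_ifs <;> positivity

theorem heatIntegrand_eq_zero_iff {x y : EuclideanSpace ℝ (Fin n)} :
    heatIntegrand n J x t ε y = 0 ↔ J y = ⊤ := by
  simp [heatIntegrand, Real.exp_ne_zero]

theorem exp_mul_heatIntegrand (ht : t ≠ 0) (hε : ε ≠ 0) (x y : EuclideanSpace ℝ (Fin n)) :
    Real.exp (‖x‖ ^ 2 / (2 * t * ε)) * heatIntegrand n J x t ε y =
      heatIntegrand n J 0 t ε y * Real.exp ⟪x, (t * ε)⁻¹ • y⟫ := by
  by_cases hy : J y = ⊤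
  · simp [heatIntegrand, hy]
  · simp only [heatIntegrand, hy, if_false, ← Real.exp_add, norm_sub_sq_real x y, zero_sub,
      norm_neg, real_inner_smul_right]
    congr 1
    field_simp
    ring

theorem aemeasurable_heatIntegrand (hJ : AEMeasurable J) (x : EuclideanSpace ℝ (Fin n)) :
    AEMeasurable (heatIntegrand n J x t ε) := by
  have hmeas : Measurable fun p : EuclideanSpace ℝ (Fin n) × EReal ↦
      if p.2 = ⊤ then 0 else Real.exp (-((‖x - p.1‖ ^ 2 / (2 * t) + p.2.toReal) / ε)) :=
    Measurable.ite (measurable_snd (measurableSet_singleton ⊤)) measurable_const (by fun_prop)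
  exact hmeas.comp_aemeasurable (aemeasurable_id.prodMk hJ)

theorem heatIntegrand_le (hε : 0 < ε) {x y : EuclideanSpace ℝ (Fin n)} (hy : (m : EReal) ≤ J y) :
    heatIntegrand n J x t ε y ≤
      Real.exp (-m / ε) * Real.exp (-(1 / (2 * t * ε)) * ‖x - y‖ ^ 2) := by
  unfold heatIntegrand
  split_ifs with htop
  · positivity
  · have hm : m ≤ (J y).toReal := by
      simpa using EReal.toReal_le_toReal hy (EReal.coe_ne_bot m) htop
    calc
      Real.exp (-((‖x - y‖ ^ 2 / (2 * t) + (J y).toReal) / ε))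
          ≤ Real.exp (-((‖x - y‖ ^ 2 / (2 * t) + m) / ε)) := by gcongr
      _ = Real.exp (-m / ε) * Real.exp (-(1 / (2 * t * ε)) * ‖x - y‖ ^ 2) := by
        rw [← Real.exp_add]
        ring_nf

theorem integrable_heatIntegrand (ht : 0 < t) (hε : 0 < ε) (hJ : AEMeasurable J)
    (hm : ∀ᵐ y, (m : EReal) ≤ J y) (x : EuclideanSpace ℝ (Fin n)) :
    Integrable (heatIntegrand n J x t ε) := by
  have hgauss : Integrable fun y : EuclideanSpace ℝ (Fin n) ↦
      Real.exp (-(1 / (2 * t * ε)) * ‖x - y‖ ^ 2) :=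
    (integrable_exp_neg_mul_sq_norm (by positivity)).comp_sub_left x
  refine (hgauss.const_mul (Real.exp (-m / ε))).mono'
    (aemeasurable_heatIntegrand hJ x).aestronglyMeasurable ?_
  filter_upwards [hm] with y hy
  rw [Real.norm_of_nonneg (heatIntegrand_nonneg x y)]
  exact heatIntegrand_le hε hy

theorem heatSol_pos (ht : 0 < t) (hε : 0 < ε) (hJ : AEMeasurable J)
    (hm : ∀ᵐ y, (m : EReal) ≤ J y) (hdom : ¬ ∀ᵐ y, J y = ⊤) (x : EuclideanSpace ℝ (Fin n)) :
    0 < heatSol n J x t ε := by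
  refine mul_pos (by positivity)
    ((integral_nonneg (heatIntegrand_nonneg x)).lt_of_ne' fun hzero ↦ hdom ?_)
  rw [integral_eq_zero_iff_of_nonneg (heatIntegrand_nonneg x)
    (integrable_heatIntegrand ht hε hJ hm x)] at hzero
  exact hzero.mono fun y hy ↦ heatIntegrand_eq_zero_iff.1 hy

/-- The unnormalised Gibbs measure `exp(−(‖y‖²/(2t) + J(y))/ε) dy`, the base measure of the
exponential family whose partition function is, up to a constant, `exp(‖x‖²/(2tε)) w_ε(x,t)`. -/
noncomputable def gibbsMeasure (n : ℕ) (J : EuclideanSpace ℝ (Fin n) → EReal) (t ε : ℝ) :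
    Measure (EuclideanSpace ℝ (Fin n)) :=
  volume.withDensity fun y ↦ ENNReal.ofReal (heatIntegrand n J 0 t ε y)

theorem gibbsMeasure_ne_zero (hJ : AEMeasurable J) (hdom : ¬ ∀ᵐ y, J y = ⊤) :
    gibbsMeasure n J t ε ≠ 0 := by
  rw [gibbsMeasure, Ne, withDensity_eq_zero_iff (aemeasurable_heatIntegrand hJ 0).ennreal_ofReal]
  refine fun h ↦ hdom (h.mono fun y hy ↦ ?_)
  exact heatIntegrand_eq_zero_iff.1 <|
    (ENNReal.ofReal_eq_zero.1 hy).antisymm (heatIntegrand_nonneg 0 y)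

theorem integral_gibbsMeasure (hJ : AEMeasurable J) (f : EuclideanSpace ℝ (Fin n) → ℝ) :
    ∫ y, f y ∂gibbsMeasure n J t ε = ∫ y, heatIntegrand n J 0 t ε y * f y := by
  simp [gibbsMeasure, integral_withDensity_eq_integral_toReal_smul₀
    (aemeasurable_heatIntegrand hJ 0).ennreal_ofReal, heatIntegrand_nonneg]

theorem integrable_gibbsMeasure_iff (hJ : AEMeasurable J) {f : EuclideanSpace ℝ (Fin n) → ℝ} :
    Integrable f (gibbsMeasure n J t ε) ↔
      Integrable fun y ↦ heatIntegrand n J 0 t ε y * f y := by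
  simp [gibbsMeasure, integrable_withDensity_iff_integrable_smul₀'
    (aemeasurable_heatIntegrand hJ 0).ennreal_ofReal, heatIntegrand_nonneg]

theorem integrable_exp_inner_gibbsMeasure (ht : 0 < t) (hε : 0 < ε) (hJ : AEMeasurable J)
    (hm : ∀ᵐ y, (m : EReal) ≤ J y) (x : EuclideanSpace ℝ (Fin n)) :
    Integrable (fun y ↦ Real.exp ⟪x, (t * ε)⁻¹ • y⟫) (gibbsMeasure n J t ε) := by
  simp_rw [integrable_gibbsMeasure_iff hJ, ← exp_mul_heatIntegrand ht.ne' hε.ne']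
  exact (integrable_heatIntegrand ht hε hJ hm x).const_mul _

theorem exp_mul_heatSol (ht : t ≠ 0) (hε : ε ≠ 0) (hJ : AEMeasurable J)
    (x : EuclideanSpace ℝ (Fin n)) :
    Real.exp (‖x‖ ^ 2 / (2 * t * ε)) * heatSol n J x t ε =
      (2 * Real.pi * t * ε) ^ (-(n : ℝ) / 2) *
        ∫ y, Real.exp ⟪x, (t * ε)⁻¹ • y⟫ ∂gibbsMeasure n J t ε := by
  simp_rw [integral_gibbsMeasure hJ, ← exp_mul_heatIntegrand ht hε, integral_const_mul, heatSol]
  ring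

theorem log_exp_mul_heatSol (ht : 0 < t) (hε : 0 < ε) (hJ : AEMeasurable J)
    (hm : ∀ᵐ y, (m : EReal) ≤ J y) (hdom : ¬ ∀ᵐ y, J y = ⊤) (x : EuclideanSpace ℝ (Fin n)) :
    Real.log (Real.exp (‖x‖ ^ 2 / (2 * t * ε)) * heatSol n J x t ε) =
      logPartition (fun y ↦ (t * ε)⁻¹ • y) (gibbsMeasure n J t ε) x +
        Real.log ((2 * Real.pi * t * ε) ^ (-(n : ℝ) / 2)) := by
  have : NeZero (gibbsMeasure n J t ε) := ⟨gibbsMeasure_ne_zero hJ hdom⟩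
  have hpos := integral_exp_pos (integrable_exp_inner_gibbsMeasure ht hε hJ hm x)
  rw [exp_mul_heatSol ht.ne' hε.ne' hJ, Real.log_mul (by positivity) hpos.ne', add_comm,
    logPartition]

theorem norm_sq_div_two_sub_mul_viscSol (ht : t ≠ 0) (hε : ε ≠ 0) {x : EuclideanSpace ℝ (Fin n)}
    (hx : heatSol n J x t ε ≠ 0) :
    ‖x‖ ^ 2 / 2 - t * viscSol n J x t ε =
      t * ε * Real.log (Real.exp (‖x‖ ^ 2 / (2 * t * ε)) * heatSol n J x t ε) := by
  rw [Real.log_mul (Real.exp_ne_zero _) hx, Real.log_exp, viscSol]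
  field_simp
  ring

end HeatIntegral

theorem heatSol_strictly_log_convex_general (n : ℕ) (J : EuclideanSpace ℝ (Fin n) → EReal)
    (hJ : AEMeasurable J) (m : ℝ) (hm : ∀ᵐ y, (m : EReal) ≤ J y) (hdom : ¬ ∀ᵐ y, J y = ⊤)
    (t ε : ℝ) (ht : 0 < t) (hε : 0 < ε) :
    StrictConvexOn ℝ Set.univ
      (fun x : EuclideanSpace ℝ (Fin n) =>
        Real.log (Real.exp (‖x‖ ^ 2 / (2 * t * ε)) * heatSol n J x t ε)) ∧
    StrictConvexOn ℝ Set.univ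
      (fun x : EuclideanSpace ℝ (Fin n) => ‖x‖ ^ 2 / 2 - t * viscSol n J x t ε) := by
  have hlog : StrictConvexOn ℝ Set.univ (fun x : EuclideanSpace ℝ (Fin n) =>
      Real.log (Real.exp (‖x‖ ^ 2 / (2 * t * ε)) * heatSol n J x t ε)) := by
    simp_rw [log_exp_mul_heatSol ht hε hJ hm hdom]
    refine (strictConvexOn_logPartition convex_univ
      (fun x _ ↦ integrable_exp_inner_gibbsMeasure ht hε hJ hm x) fun θ hθ c ↦ ?_).add_const _
    simp_rw [real_inner_smul_right, ← real_inner_smul_left]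
    exact not_ae_inner_eq_const_of_absolutelyContinuous (withDensity_absolutelyContinuous _ _)
      (gibbsMeasure_ne_zero hJ hdom) (smul_ne_zero (by positivity) hθ) c
  refine ⟨hlog, ?_⟩
  simp_rw [fun x ↦ norm_sq_div_two_sub_mul_viscSol ht.ne' hε.ne'
    (heatSol_pos ht hε hJ hm hdom x).ne']
  exact strictConvexOn_const_mul hlog (mul_pos ht hε)

/-- For every `t > 0` and `ε > 0`, `x ↦ exp(‖x‖²/(2tε)) w_ε(x,t)` is strictly log-convex
on `ℝⁿ`; equivalently, `x ↦ ½‖x‖² − t S_ε(x,t)` is strictly convex on `ℝⁿ`. -/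
theorem heatSol_strictly_log_convex (n : ℕ) (hn : 1 ≤ n)
    (J : EuclideanSpace ℝ (Fin n) → EReal)
    (hJ_proper_bot : ∀ y, J y ≠ ⊥)
    (hJ_lsc : LowerSemicontinuous J)
    (hJ_convex : ∀ y₁ y₂ : EuclideanSpace ℝ (Fin n), ∀ a b : ℝ, 0 ≤ a → 0 ≤ b → a + b = 1 →
      J (a • y₁ + b • y₂) ≤ (a : EReal) * J y₁ + (b : EReal) * J y₂)
    (hJ_int : (interior {y : EuclideanSpace ℝ (Fin n) | J y ≠ ⊤}).Nonempty)
    (hJ_inf : (⨅ y : EuclideanSpace ℝ (Fin n), J y) = (0 : EReal))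
    (t ε : ℝ) (ht : 0 < t) (hε : 0 < ε) :
    StrictConvexOn ℝ Set.univ
      (fun x : EuclideanSpace ℝ (Fin n) =>
        Real.log (Real.exp (‖x‖ ^ 2 / (2 * t * ε)) * heatSol n J x t ε)) ∧
    StrictConvexOn ℝ Set.univ
      (fun x : EuclideanSpace ℝ (Fin n) => ‖x‖ ^ 2 / 2 - t * viscSol n J x t ε) := by
  refine heatSol_strictly_log_convex_general n J hJ_lsc.measurable.aemeasurable 0
    (ae_of_all _ fun y ↦ hJ_inf.ge.trans (iInf_le J y)) (fun htop ↦ ?_) t ε ht hε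
  exact (isOpen_interior.measure_pos volume hJ_int).ne'
    (measure_mono_null interior_subset (ae_iff.1 htop))
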